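/- The naturally-weighted average of the volume is asymptotically (√π/2)·n^{3/2}: letting ν be the probability distribution on W_{2n} with ν(w) proportional to F(w), one has lim_{n→∞} (Σ_{w ∈ W_{2n}} ν(w)·V(w)) / ((√π/2)·n^{3/2}) = 1, i.e., lim_{n→∞} (Σ_{w ∈ W_{2n}} F(w)·V(w)) / ((Σ_{w ∈ W_{2n}} F(w)) · (√π/2)·n^{3/2}) = 1. -/

import Mathlib

open scoped BigOperators ENNReal

attribute [local instance] Classical.propDecidable

namespace Cooling

/-- Words over the alphabet `{1,2}`, modeled as lists of booleans:
`true` encodes the letter `1`, `false` encodes the letter `2`. -/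
abbrev Word := List Bool

/-- `w` is a configuration of length `2*n`: a word of length `2*n` with as many
occurrences of the letter `1` (`true`) as of the letter `2` (`false`). -/
def IsConfig (n : ℕ) (w : Word) : Prop :=
  w.length = 2 * n ∧ w.count true = n

/-- The (finite) set `W_{2n}` of all configurations of length `2*n`. -/
def configSet (n : ℕ) : Finset Word :=
  ((Finset.univ : Finset (Fin (2 * n) → Bool)).image List.ofFn).filter
    (fun w => w.count true = n)

/-- The number `E(w)` of mismatches of `w`: positions `i` with `w_i = w_{i+1}`. -/
def mismatches (w : Word) : ℕ :=
  (w.zip w.tail).countP (fun p => p.1 == p.2)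

/-- The number `F(w)` of flips performable on `w`: positions `i` with `w_i ≠ w_{i+1}`. -/
def flipCount (w : Word) : ℕ :=
  (w.zip w.tail).countP (fun p => p.1 != p.2)

/-- The word `w^{(i)}` obtained from `w` by exchanging the letters at positions
`i` and `i+1` (0-indexed). -/
def flip (w : Word) (i : ℕ) : Word :=
  (w.set i (w.getD (i + 1) true)).set (i + 1) (w.getD i true)

/-- A flip is permitted at position `i` if both positions `i` and `i+1` exist and the
corresponding letters are different. -/
def CanFlip (w : Word) (i : ℕ) : Prop :=
  i + 1 < w.length ∧ w.getD i true ≠ w.getD (i + 1) true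

/-- The set of positions at which a flip is allowed in the cooling process:
positions of permitted flips which do not increase the number of mismatches. -/
noncomputable def allowedFlips (w : Word) : Finset ℕ :=
  (Finset.range w.length).filter
    (fun i => CanFlip w i ∧ mismatches (flip w i) ≤ mismatches w)

/-- One step of the cooling process: if `E(w) = 0`, stay at `w`; otherwise, perform
a flip chosen uniformly at random among the flips which do not increase the number
of mismatches. -/
noncomputable def coolStep (w : Word) : PMF Word :=
  if h : mismatches w ≠ 0 ∧ (allowedFlips w).Nonempty then
    (PMF.uniformOfFinset (allowedFlips w) h.2).map (flip w)
  else
    PMF.pure w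

/-- The distribution of the cooling process at time `t`, started from `w`. -/
noncomputable def coolDist (w : Word) : ℕ → PMF Word
  | 0 => PMF.pure w
  | t + 1 => (coolDist w t).bind coolStep

/-- The expected convergence time `E[T | w₀ = w]` of the cooling process started at `w`,
where `T = min {t ≥ 0 : E(w_t) = 0}`.  Since mismatch-free configurations are absorbing,
`E[T] = ∑_{t ≥ 0} P(T > t) = ∑_{t ≥ 0} P(E(w_t) ≠ 0)`. -/
noncomputable def expConvTime (w : Word) : ℝ≥0∞ :=
  ∑' t : ℕ, (coolDist w t).toOuterMeasure {v | mismatches v ≠ 0}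

/-- The factor of `w` starting at position `s` (0-indexed) of length `l`. -/
def factor (w : Word) (s l : ℕ) : Word := (w.drop s).take l

/-- The height `|p|₁ - |p|₂` of the length-`s` prefix `p` of `w`. -/
def height (w : Word) (s : ℕ) : ℤ :=
  ((w.take s).count true : ℤ) - (w.take s).count false

/-- The occurrence `(s, l)` is a positive Dyck factor of `w`. -/
def IsPosDyckAt (w : Word) (s l : ℕ) : Prop :=
  0 < l ∧ s + l ≤ w.length ∧
  (factor w s l).count true = (factor w s l).count false ∧
  (∀ i ≤ l, ((factor w s l).take i).count false ≤ ((factor w s l).take i).count true) ∧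
  0 ≤ height w s

/-- The occurrence `(s, l)` is a negative Dyck factor of `w`. -/
def IsNegDyckAt (w : Word) (s l : ℕ) : Prop :=
  0 < l ∧ s + l ≤ w.length ∧
  (factor w s l).count true = (factor w s l).count false ∧
  (∀ i ≤ l, ((factor w s l).take i).count true ≤ ((factor w s l).take i).count false) ∧
  height w s ≤ 0

/-- The occurrence `(s, l)` is a Dyck factor of `w` (positive or negative). -/
def IsDyckAt (w : Word) (s l : ℕ) : Prop :=
  IsPosDyckAt w s l ∨ IsNegDyckAt w s l

/-- The occurrence `(s, l)` is a maximal Dyck factor of `w`: no Dyck factor of `w`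
with the same height contains it (other than itself). -/
def IsMaxDyckAt (w : Word) (s l : ℕ) : Prop :=
  IsDyckAt w s l ∧
  ∀ s' l', IsDyckAt w s' l' → height w s' = height w s → s' ≤ s → s + l ≤ s' + l' →
    s' = s ∧ l' = l

/-- The set `DF(w)` of (occurrences of) maximal Dyck factors of `w`,
encoded as pairs (starting position, length). -/
noncomputable def DF (w : Word) : Finset (ℕ × ℕ) :=
  ((Finset.range (w.length + 1)) ×ˢ (Finset.range (w.length + 1))).filter
    (fun sl => IsMaxDyckAt w sl.1 sl.2)

/-- The variant `φ_α(w) = ∑_{v ∈ DF(w)} (1 + |v|₁)^α`. -/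
noncomputable def phi (α : ℝ) (w : Word) : ℝ :=
  ∑ sl ∈ DF w, (1 + ((factor w sl.1 sl.2).count true : ℝ)) ^ α

/-- The volume `V(w) = (1/2) ∑_{k=1}^{|w|} |h_{k-1}(w) + h_k(w)|`: the area between
the broken-line representation of `w` and the horizontal axis. -/
noncomputable def volume (w : Word) : ℝ :=
  (1 / 2) * ∑ k ∈ Finset.range w.length, |((height w k + height w (k + 1) : ℤ) : ℝ)|

/-!
Removing the two letters of a marked flip identifies the words of length `2n` carrying a marked flip
with the words of length `2n - 2` into which a peak or a valley has been inserted at a marked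
position. Inserting a turn at height `x` adds `|x| + |x ± 1|` to the sum of the `|h_k|`, which for a
balanced word is its volume, and `|x + 1| + |x - 1|` is `2 |x|`, plus `2` when `x = 0`. Hence
`∑ F(w)` and `∑ F(w) V(w)` are determined by the number, the total area and the total number of
visits to the axis of the balanced paths of length `2n - 2`.

Let `C`, `A` and `Z` be these quantities for the paths of length `N` from height `h` to the axis.
Splitting off the first step gives `4 A = (N + 1) |h| C + (N + h²) Z`, and `Z = 2 ^ N` for `h = 0`
and `N` even because moving the starting point two steps towards the axis increases `Z` by a single
path count. This yields the exact values `∑ F(w) = n * centralBinom n` and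
`4 ∑ F(w) V(w) = (2n² - n + 1) 4 ^ n`, and Wallis' product `4 ^ n / centralBinom n ~ √(π n)`
concludes.
-/

open Finset

section Words

/-- The increment `±1` of the height caused by a letter: `+1` for `1`, `-1` for `2`. -/
def step (b : Bool) : ℤ := if b then 1 else -1

/-- The final height `|w|₁ - |w|₂` of the path of `w`, so that `height w k` is the rise of the
prefix `w.take k`. -/
def rise (w : Word) : ℤ := (w.count true : ℤ) - w.count false

/-- The words of length `N` whose path, started at height `h`, ends on the axis. -/
noncomputable def paths (N : ℕ) (h : ℤ) : Finset Word :=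
  ((univ : Finset (Fin N → Bool)).image List.ofFn).filter (fun w => h + rise w = 0)

/-- The number of paths of length `N` from height `h` to the axis. -/
noncomputable def pathCount (N : ℕ) (h : ℤ) : ℤ := #(paths N h)

variable {M : Type*} [AddCommMonoid M]

theorem step_not (b : Bool) : step (!b) = -step b := by cases b <;> rfl

theorem rise_cons (b : Bool) (w : Word) : rise (b :: w) = step b + rise w := by
  cases b <;> simp [rise, step] <;> ring

theorem mem_paths {N : ℕ} {h : ℤ} {w : Word} :
    w ∈ paths N h ↔ w.length = N ∧ h + rise w = 0 := by
  simp only [paths, mem_filter, mem_image, mem_univ, true_and, and_congr_left_iff]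
  intro _
  constructor
  · rintro ⟨v, rfl⟩
    exact List.length_ofFn
  · rintro rfl
    exact ⟨w.get, List.ofFn_get w⟩

theorem configSet_eq_paths (n : ℕ) : configSet n = paths (2 * n) 0 := by
  refine filter_congr fun w hw => ?_
  obtain ⟨v, -, rfl⟩ := mem_image.mp hw
  have := List.count_false_add_count_true (List.ofFn v)
  rw [List.length_ofFn] at this
  rw [rise]
  omega

theorem sum_paths_zero (h : ℤ) (f : Word → M) :
    ∑ w ∈ paths 0 h, f w = if h = 0 then f [] else 0 := by
  have : paths 0 h = if h = 0 then {[]} else ∅ := by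
    ext w
    cases w <;> split_ifs <;> simp_all [mem_paths, rise]
  rw [this]
  split_ifs <;> simp

theorem sum_paths_succ (N : ℕ) (h : ℤ) (f : Word → M) :
    ∑ w ∈ paths (N + 1) h, f w = ∑ b, ∑ w ∈ paths N (h + step b), f (b :: w) := by
  rw [sum_sigma']
  refine (sum_bij (fun bw _ => bw.1 :: bw.2) ?_ ?_ ?_ fun _ _ => rfl).symm
  · simp +contextual [mem_paths, rise_cons, add_assoc]
  · rintro ⟨b, u⟩ - ⟨c, v⟩ - h_eq
    obtain ⟨rfl, rfl⟩ := List.cons_eq_cons.mp h_eq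
    rfl
  · intro w hw
    obtain ⟨b, v, rfl⟩ := List.exists_cons_of_length_eq_add_one (mem_paths.mp hw).1
    refine ⟨⟨b, v⟩, ?_, rfl⟩
    simpa [mem_paths, rise_cons, add_assoc] using hw

theorem pathCount_eq_sum (N : ℕ) (h : ℤ) : pathCount N h = ∑ _w ∈ paths N h, 1 := by
  rw [pathCount, sum_const, nsmul_one]

theorem pathCount_zero (h : ℤ) : pathCount 0 h = if h = 0 then 1 else 0 := by
  rw [pathCount_eq_sum, sum_paths_zero]

theorem pathCount_succ (N : ℕ) (h : ℤ) :
    pathCount (N + 1) h = pathCount N (h + 1) + pathCount N (h - 1) := by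
  simp only [pathCount_eq_sum]
  rw [sum_paths_succ, Fintype.sum_bool]
  rfl

end Words

section Flips

variable {M : Type*} [AddCommMonoid M]

/-- The word obtained from `w` by inserting the two letters `b`, `!b` after the first `i` letters:
a peak (`b = true`) or a valley (`b = false`) is added to the path. -/
def insertTurn (w : Word) (i : ℕ) (b : Bool) : Word := w.take i ++ b :: (!b) :: w.drop i

theorem insertTurn_zero (w : Word) (b : Bool) : insertTurn w 0 b = b :: (!b) :: w := rfl

theorem insertTurn_cons_succ (c : Bool) (w : Word) (i : ℕ) (b : Bool) :
    insertTurn (c :: w) (i + 1) b = c :: insertTurn w i b := rfl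

theorem flipCount_cons_cons (b c : Bool) (w : Word) :
    flipCount (b :: c :: w) = flipCount (c :: w) + if c = !b then 1 else 0 := by
  cases b <;> cases c <;> simp [flipCount]

theorem sum_paths_flipCount_cons_smul (N : ℕ) (h : ℤ) (b : Bool) (g : Word → M) :
    ∑ w ∈ paths (N + 1) h, flipCount (b :: w) • g w =
      ∑ w ∈ paths (N + 1) h, flipCount w • g w +
        ∑ w ∈ paths N (h - step b), g ((!b) :: w) := by
  simp only [sum_paths_succ, flipCount_cons_cons, add_smul, sum_add_distrib]
  congr 1
  cases b <;> simp [step, sub_eq_add_neg]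

theorem sum_paths_add_two_flipCount_smul (N : ℕ) (h : ℤ) (g : Word → M) :
    ∑ w ∈ paths (N + 2) h, flipCount w • g w =
      ∑ b, ∑ w ∈ paths (N + 1) (h + step b), flipCount w • g (b :: w) +
        ∑ w ∈ paths N h, ∑ b, g (insertTurn w 0 b) := by
  simp only [sum_paths_succ (N + 1), sum_paths_flipCount_cons_smul, add_sub_cancel_right,
    sum_add_distrib, insertTurn_zero]
  rw [sum_comm (s := paths N h)]

theorem sum_paths_flipCount_smul (N : ℕ) (h : ℤ) (g : Word → M) :
    ∑ w ∈ paths (N + 2) h, flipCount w • g w =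
      ∑ w ∈ paths N h, ∑ i ∈ range (N + 1), ∑ b, g (insertTurn w i b) := by
  induction N generalizing h g with
  | zero =>
    rw [sum_paths_add_two_flipCount_smul]
    simp [sum_paths_succ, sum_paths_zero, flipCount]
  | succ N ih =>
    simp only [sum_paths_add_two_flipCount_smul (N + 1), ih, sum_range_succ' _ (N + 1),
      sum_add_distrib, sum_paths_succ N h, insertTurn_cons_succ]

theorem sum_paths_flipCount (N : ℕ) (h : ℤ) :
    ∑ w ∈ paths (N + 2) h, (flipCount w : ℤ) = 2 * (N + 1) * pathCount N h := by
  have := sum_paths_flipCount_smul N h fun _ => (1 : ℤ)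
  simp only [nsmul_one, sum_const, card_range, Finset.card_univ, Fintype.card_bool] at this
  rw [this, pathCount]
  push_cast [nsmul_eq_mul]
  ring

end Flips

section Counts

theorem pathCount_neg (N : ℕ) (h : ℤ) : pathCount N (-h) = pathCount N h := by
  induction N generalizing h with
  | zero => simp [pathCount_zero]
  | succ N ih =>
    rw [pathCount_succ, pathCount_succ, ← ih (h + 1), ← ih (h - 1)]
    ring_nf

-- The first step of a uniform path of length `N + 1` from `h` to the axis has mean `-h / (N + 1)`.
theorem pathCount_drift (N : ℕ) (h : ℤ) :
    (N + 1) * (pathCount N (h + 1) - pathCount N (h - 1)) = -h * pathCount (N + 1) h := by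
  induction N generalizing h with
  | zero =>
    simp only [pathCount_succ, pathCount_zero]
    grind
  | succ N ih =>
    have up := ih (h + 1)
    have down := ih (h - 1)
    simp only [pathCount_succ, add_sub_cancel_right, sub_add_cancel] at *
    push_cast
    linear_combination up + down

theorem pathCount_abs_drift (N : ℕ) (h : ℤ) :
    (N + 1) * (|h + 1| * pathCount N (h + 1) + |h - 1| * pathCount N (h - 1)) =
      N * |h| * pathCount (N + 1) h +
        (N + 1) * if h = 0 then pathCount (N + 1) 0 else 0 := by
  have drift := pathCount_drift N h
  rw [pathCount_succ] at drift ⊢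
  rcases lt_trichotomy h 0 with neg | rfl | pos
  · rw [abs_of_neg neg, abs_of_nonpos (by omega), abs_of_neg (by omega), if_neg neg.ne]
    linear_combination -drift
  · simp [pathCount_succ]
  · rw [abs_of_pos pos, abs_of_pos (by omega), abs_of_nonneg (by omega), if_neg pos.ne']
    linear_combination drift

theorem pathCount_add_two_zero (N : ℕ) :
    (N + 2) * pathCount (N + 2) 0 = 4 * (N + 1) * pathCount N 0 := by
  have up := pathCount_drift N 1
  have down := pathCount_drift N (-1)
  norm_num [pathCount_succ] at up down ⊢
  linear_combination up - down

theorem pathCount_two_mul_zero (m : ℕ) : pathCount (2 * m) 0 = m.centralBinom := by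
  induction m with
  | zero => simp [pathCount_zero]
  | succ m ih =>
    have path_rec := pathCount_add_two_zero (2 * m)
    have binom_rec : ((m : ℤ) + 1) * (m + 1).centralBinom = 2 * (2 * m + 1) * m.centralBinom :=
      mod_cast m.succ_mul_centralBinom_succ
    rw [ih] at path_rec
    push_cast at path_rec
    apply mul_left_cancel₀ (by positivity : (2 * (m : ℤ) + 2) ≠ 0)
    rw [mul_add_one]
    linear_combination path_rec - 2 * binom_rec

end Counts

section Heights

variable {M : Type*} [AddCommMonoid M]

/-- The sum of `f` over the heights of all points of the path of `w` started at height `h`, both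
endpoints included. -/
def heightSum (f : ℤ → M) (h : ℤ) (w : Word) : M :=
  ∑ k ∈ range (w.length + 1), f (h + height w k)

theorem height_zero (w : Word) : height w 0 = 0 := by simp [height]

theorem height_length (w : Word) : height w w.length = rise w := by simp [height, rise]

theorem height_cons_succ (b : Bool) (w : Word) (k : ℕ) :
    height (b :: w) (k + 1) = step b + height w k :=
  rise_cons b (w.take k)

theorem heightSum_nil (f : ℤ → M) (h : ℤ) : heightSum f h [] = f h := by
  simp [heightSum, height_zero]

theorem heightSum_cons (f : ℤ → M) (h : ℤ) (b : Bool) (w : Word) :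
    heightSum f h (b :: w) = f h + heightSum f (h + step b) w := by
  rw [heightSum, List.length_cons, sum_range_succ', height_zero, add_zero, add_comm]
  simp only [height_cons_succ, ← add_assoc, heightSum]

theorem heightSum_insertTurn (f : ℤ → M) (h : ℤ) (b : Bool) {w : Word} {i : ℕ}
    (hi : i ≤ w.length) :
    heightSum f h (insertTurn w i b) =
      heightSum f h w + f (h + height w i) + f (h + height w i + step b) := by
  induction i generalizing h w with
  | zero =>
    simp only [insertTurn_zero, heightSum_cons, step_not, add_neg_cancel_right, height_zero,
      add_zero]
    abel
  | succ i ih =>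
    obtain ⟨c, v, rfl⟩ := List.exists_cons_of_length_pos (by omega : 0 < w.length)
    rw [insertTurn_cons_succ, heightSum_cons, ih _ (by simpa using hi), heightSum_cons,
      height_cons_succ]
    simp only [add_assoc]

theorem sum_paths_heightSum_succ (f : ℤ → ℤ) (N : ℕ) (h : ℤ) :
    ∑ w ∈ paths (N + 1) h, heightSum f h w =
      f h * pathCount (N + 1) h + ∑ w ∈ paths N (h + 1), heightSum f (h + 1) w +
        ∑ w ∈ paths N (h - 1), heightSum f (h - 1) w := by
  rw [sum_paths_succ, pathCount_succ]
  simp only [heightSum_cons, sum_add_distrib, Fintype.sum_bool, sum_const, pathCount, step, if_true,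
    Bool.false_eq_true, if_false, nsmul_eq_mul, ← sub_eq_add_neg]
  ring

/-- The number of visits to the axis, endpoints included, summed over all paths of length `N` from
height `h` to the axis. -/
noncomputable def visitCount (N : ℕ) (h : ℤ) : ℤ :=
  ∑ w ∈ paths N h, heightSum (fun x => if x = 0 then 1 else 0) h w

/-- The sum of the distances to the axis of all points of all paths of length `N` from height `h` to
the axis. For `h = 0` it is the total area of these paths, by `volume_eq_heightSum`. -/
noncomputable def pathArea (N : ℕ) (h : ℤ) : ℤ :=
  ∑ w ∈ paths N h, heightSum (fun x => |x|) h w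

theorem visitCount_zero (h : ℤ) : visitCount 0 h = if h = 0 then 1 else 0 := by
  simp +contextual [visitCount, sum_paths_zero, heightSum_nil]

theorem visitCount_succ (N : ℕ) (h : ℤ) :
    visitCount (N + 1) h = (if h = 0 then pathCount (N + 1) 0 else 0) +
      visitCount N (h + 1) + visitCount N (h - 1) := by
  rw [visitCount, sum_paths_heightSum_succ]
  split_ifs with h0
  · rw [one_mul, h0]; rfl
  · rw [zero_mul]; rfl

theorem pathArea_zero (h : ℤ) : pathArea 0 h = 0 := by
  simp +contextual [pathArea, sum_paths_zero, heightSum_nil]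

theorem pathArea_succ (N : ℕ) (h : ℤ) :
    pathArea (N + 1) h = |h| * pathCount (N + 1) h + pathArea N (h + 1) + pathArea N (h - 1) :=
  sum_paths_heightSum_succ _ N h

theorem visitCount_sub_one_sub_visitCount_add_one (N : ℕ) (h : ℤ) :
    visitCount N (h - 1) - visitCount N (h + 1) = h.sign * pathCount (N + 1) h := by
  induction N generalizing h with
  | zero =>
    simp only [visitCount_zero, pathCount_succ, pathCount_zero]
    rcases lt_trichotomy h 0 with neg | rfl | pos
    · rw [Int.sign_eq_neg_one_of_neg neg]; grind
    · simp
    · rw [Int.sign_eq_one_of_pos pos]; grind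
  | succ N ih =>
    have up := ih (h + 1)
    have down := ih (h - 1)
    simp only [visitCount_succ, pathCount_succ _ h, add_sub_cancel_right, sub_add_cancel] at *
    rcases lt_trichotomy h 0 with neg | rfl | pos
    · rw [Int.sign_eq_neg_one_of_neg neg]; grind
    · have symm := pathCount_neg (N + 1) 1
      simp only [Int.sign_zero]
      grind
    · rw [Int.sign_eq_one_of_pos pos]; grind

theorem visitCount_add_two_zero (N : ℕ) : visitCount (N + 2) 0 = 4 * visitCount N 0 := by
  have up := visitCount_sub_one_sub_visitCount_add_one N 1
  have down := visitCount_sub_one_sub_visitCount_add_one N (-1)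
  norm_num [visitCount_succ, pathCount_succ (N + 1)] at up down ⊢
  linear_combination down - up

theorem visitCount_two_mul_zero (m : ℕ) : visitCount (2 * m) 0 = 4 ^ m := by
  induction m with
  | zero => simp [visitCount_zero]
  | succ m ih => rw [mul_add_one, visitCount_add_two_zero, ih, pow_succ']

theorem four_mul_pathArea (N : ℕ) (h : ℤ) :
    4 * pathArea N h = (N + 1) * |h| * pathCount N h + (N + h ^ 2) * visitCount N h := by
  induction N generalizing h with
  | zero =>
    rw [pathArea_zero, pathCount_zero, visitCount_zero]
    split_ifs with h0 <;> simp [h0]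
  | succ N ih =>
    have drift := pathCount_abs_drift N h
    have visits := visitCount_sub_one_sub_visitCount_add_one N h
    have sign : h.sign * h = |h| := Int.sign_mul_self_eq_abs h
    rw [pathArea_succ, mul_add, mul_add, ih, ih, visitCount_succ]
    push_cast
    have off_axis : h ^ 2 * (if h = 0 then pathCount (N + 1) 0 else 0) = 0 := by
      split_ifs with h0 <;> simp [h0]
    linear_combination drift - 2 * h * visits - 2 * pathCount (N + 1) h * sign - off_axis

theorem sum_heightSum_abs_insertTurn (h : ℤ) (w : Word) :
    ∑ i ∈ range (w.length + 1), ∑ b, heightSum (fun x => |x|) h (insertTurn w i b) =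
      (2 * w.length + 6) * heightSum (fun x => |x|) h w +
        2 * heightSum (fun x => if x = 0 then 1 else 0) h w := by
  have abs_neighbours (x : ℤ) : |x + 1| + |x - 1| = 2 * |x| + 2 * if x = 0 then 1 else 0 := by
    grind
  have turn_sum : ∀ i ∈ range (w.length + 1),
      ∑ b, heightSum (fun x => |x|) h (insertTurn w i b) =
        2 * heightSum (fun x => |x|) h w + 4 * |h + height w i| +
          2 * if h + height w i = 0 then 1 else 0 := by
    intro i hi
    have hi : i ≤ w.length := mem_range_succ_iff.mp hi
    rw [Fintype.sum_bool, heightSum_insertTurn _ _ _ hi, heightSum_insertTurn _ _ _ hi]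
    simp only [step, if_true, Bool.false_eq_true, if_false, ← sub_eq_add_neg]
    linear_combination abs_neighbours (h + height w i)
  rw [sum_congr rfl turn_sum]
  simp only [sum_add_distrib, ← mul_sum, sum_const, card_range, nsmul_eq_mul, heightSum]
  push_cast
  ring

theorem sum_paths_flipCount_mul_heightSum_abs (N : ℕ) (h : ℤ) :
    ∑ w ∈ paths (N + 2) h, flipCount w * heightSum (fun x => |x|) h w =
      (2 * N + 6) * pathArea N h + 2 * visitCount N h := by
  have := sum_paths_flipCount_smul N h (heightSum (fun x => |x|) h)
  simp only [nsmul_eq_mul] at this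
  rw [this, pathArea, visitCount, mul_sum, mul_sum, ← sum_add_distrib]
  refine sum_congr rfl fun w hw => ?_
  rw [← (mem_paths.mp hw).1, sum_heightSum_abs_insertTurn]

end Heights

section Volume

theorem height_succ {w : Word} {k : ℕ} (hk : k < w.length) :
    height w (k + 1) = height w k + step w[k] := by
  simp only [height, ← List.take_concat_get' w k hk, List.count_append, List.count_singleton]
  cases w[k] <;> simp [step] <;> ring

-- The path has unit steps, so it never crosses the axis between two consecutive points.
theorem abs_height_add_height_succ {w : Word} {k : ℕ} (hk : k < w.length) :
    |height w k + height w (k + 1)| = |height w k| + |height w (k + 1)| := by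
  rw [height_succ hk]
  cases w[k] <;> simp only [step] <;> grind

theorem volume_eq_heightSum {w : Word} (hw : rise w = 0) :
    volume w = heightSum (fun x => |x|) 0 w := by
  have drop_last := sum_range_succ (fun k => |height w k|) w.length
  have drop_first := sum_range_succ' (fun k => |height w k|) w.length
  have key : ∑ k ∈ range w.length, |height w k + height w (k + 1)| =
      2 * heightSum (fun x => |x|) 0 w := by
    rw [height_length, hw] at drop_last
    rw [height_zero] at drop_first
    rw [sum_congr rfl fun k hk => abs_height_add_height_succ (mem_range.mp hk), sum_add_distrib]
    simp only [heightSum, zero_add]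
    linear_combination -drop_last - drop_first
  rw [volume]
  simp only [← Int.cast_abs, ← Int.cast_sum, key]
  push_cast
  ring

theorem sum_flipCount_configSet (n : ℕ) :
    ∑ w ∈ configSet n, (flipCount w : ℝ) = n * n.centralBinom := by
  rw [configSet_eq_paths]
  cases n with
  | zero => simp [sum_paths_zero, flipCount]
  | succ m =>
    have flips := sum_paths_flipCount (2 * m) 0
    have binom_rec : ((m : ℝ) + 1) * (m + 1).centralBinom = 2 * (2 * m + 1) * m.centralBinom :=
      mod_cast m.succ_mul_centralBinom_succ
    rw [pathCount_two_mul_zero] at flips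
    rw [mul_add_one, Nat.cast_add_one, binom_rec]
    exact_mod_cast flips

theorem sum_flipCount_mul_volume_configSet (n : ℕ) :
    ∑ w ∈ configSet n, (flipCount w : ℝ) * volume w =
      (∑ w ∈ paths (2 * n) 0, flipCount w * heightSum (fun x => |x|) 0 w : ℤ) := by
  rw [configSet_eq_paths, Int.cast_sum]
  refine sum_congr rfl fun w hw => ?_
  rw [volume_eq_heightSum (by simpa using (mem_paths.mp hw).2), Int.cast_mul, Int.cast_natCast]

theorem four_mul_sum_flipCount_mul_volume_configSet {n : ℕ} (hn : n ≠ 0) :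
    4 * ∑ w ∈ configSet n, (flipCount w : ℝ) * volume w = (2 * n ^ 2 - n + 1) * 4 ^ n := by
  obtain ⟨m, rfl⟩ := Nat.exists_eq_add_one_of_ne_zero hn
  have total := sum_paths_flipCount_mul_heightSum_abs (2 * m) 0
  have area := four_mul_pathArea (2 * m) 0
  rw [visitCount_two_mul_zero] at total area
  have key : 4 * ∑ w ∈ paths (2 * m + 2) 0, flipCount w * heightSum (fun x => |x|) 0 w =
      (2 * (m + 1) ^ 2 - (m + 1) + 1) * 4 ^ (m + 1) := by
    rw [total]
    push_cast [abs_zero] at area ⊢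
    linear_combination (4 * m + 6) * area
  rw [sum_flipCount_mul_volume_configSet, mul_add_one]
  exact_mod_cast congrArg (Int.cast : ℤ → ℝ) key

end Volume

section Asymptotics

open Filter Topology Real

theorem wallis_mul_centralBinom_sq (n : ℕ) :
    Wallis.W n * (2 * n + 1) * n.centralBinom ^ 2 = (4 ^ n) ^ 2 := by
  have binom_eq : (n.centralBinom : ℝ) = (2 * n).factorial / n.factorial ^ 2 := by
    rw [Nat.centralBinom_eq_two_mul_choose, Nat.cast_choose ℝ (by omega : n ≤ 2 * n), two_mul,
      Nat.add_sub_cancel, sq]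
  rw [binom_eq, Wallis.W_eq_factorial_ratio, ← pow_mul, mul_comm n 2, pow_mul (4 : ℝ),
    pow_mul (2 : ℝ)]
  have := (2 * n).factorial_pos
  have := n.factorial_pos
  field_simp
  norm_num

theorem tendsto_four_pow_div_centralBinom_mul_sqrt :
    Tendsto (fun n : ℕ => 4 ^ n / (n.centralBinom * √n)) atTop (𝓝 √π) := by
  have ratio_lim : Tendsto (fun n : ℕ => 2 + (n : ℝ)⁻¹) atTop (𝓝 2) := by
    simpa using (tendsto_inv_atTop_nhds_zero_nat (𝕜 := ℝ)).const_add 2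
  have sqrt_lim := (Wallis.tendsto_W_nhds_pi_div_two.mul ratio_lim).sqrt
  rw [div_mul_cancel₀ π two_ne_zero] at sqrt_lim
  refine sqrt_lim.congr' ?_
  filter_upwards [eventually_gt_atTop 0] with n hn
  have binom_pos : (0 : ℝ) < n.centralBinom := mod_cast n.centralBinom_pos
  have wallis_pos := Wallis.W_pos n
  rw [sqrt_eq_iff_eq_sq (by positivity) (by positivity), div_pow, mul_pow, sq_sqrt (by positivity),
    ← wallis_mul_centralBinom_sq]
  field_simp

theorem tendsto_mul_four_pow_div_mul_centralBinom :
    Tendsto (fun n : ℕ => (2 * n ^ 2 - n + 1) * 4 ^ n /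
      (4 * (n * n.centralBinom) * (√π / 2 * (n : ℝ) ^ ((3 : ℝ) / 2)))) atTop (𝓝 1) := by
  have inv_lim := tendsto_inv_atTop_nhds_zero_nat (𝕜 := ℝ)
  have poly_lim : Tendsto (fun n : ℕ => 1 - (n : ℝ)⁻¹ / 2 + (n : ℝ)⁻¹ ^ 2 / 2) atTop (𝓝 1) := by
    simpa using ((inv_lim.div_const 2).const_sub 1).add ((inv_lim.pow 2).div_const 2)
  have prod_lim := poly_lim.mul (tendsto_four_pow_div_centralBinom_mul_sqrt.div_const √π)
  rw [div_self (by positivity), one_mul] at prod_lim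
  refine prod_lim.congr' ?_
  filter_upwards [eventually_gt_atTop 0] with n hn
  have rpow_eq : (n : ℝ) ^ ((3 : ℝ) / 2) = n * √n := by
    rw [sqrt_eq_rpow, ← rpow_one_add' (by positivity) (by norm_num)]
    norm_num
  have binom_pos : (0 : ℝ) < n.centralBinom := mod_cast n.centralBinom_pos
  rw [rpow_eq]
  field_simp
  ring

end Asymptotics

/-- the naturally-weighted average of the volume is asymptotically
`(√π / 2) n^{3/2}`, where the natural distribution `ν` on `W_{2n}` gives each
configuration a weight proportional to its number of performable flips. -/
theorem natural_weighted_volume_asymptotics :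
    Filter.Tendsto
      (fun n : ℕ =>
        (∑ w ∈ configSet n, (flipCount w : ℝ) * volume w) /
          ((∑ w ∈ configSet n, (flipCount w : ℝ)) *
            (Real.sqrt Real.pi / 2 * (n : ℝ) ^ ((3 : ℝ) / 2))))
      Filter.atTop (nhds 1) := by
  refine tendsto_mul_four_pow_div_mul_centralBinom.congr' ?_
  filter_upwards [Filter.eventually_ne_atTop 0] with n hn
  rw [sum_flipCount_configSet, ← four_mul_sum_flipCount_mul_volume_configSet hn, mul_assoc 4,
    mul_div_mul_left _ _ four_ne_zero]

end Cooling
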